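/- arXiv:2401.03632 — 2 statements merged into one kernel-verified Lean document; each statement's English description precedes it below -/
import Mathlib

section
/- Let R = ℤ[√3], M = R[X]/(X³), m the multiplication map, Δ the comultiplication, and h the half genus map (multiplication by √3·x). Then the puncture-move relations hold: m ∘ (h ⊗ Id_M) = h ∘ m = m ∘ (Id_M ⊗ h) as R-linear maps M ⊗ M → M, and (h ⊗ Id_M) ∘ Δ = Δ ∘ h = (Id_M ⊗ h) ∘ Δ as R-linear maps M → M ⊗ M. -/
open TensorProduct Polynomial

noncomputable section

/-- `R3` is the ring `ℤ[√3]`. -/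
abbrev R3 : Type := Zsqrtd 3

/-- `M3` is the quotient ring `R3[X]/(X³)`. -/
abbrev M3 : Type := Polynomial R3 ⧸ Ideal.span {(Polynomial.X : Polynomial R3) ^ 3}

/-- `x3` is the image of `X` in `M3`. -/
def x3 : M3 := Ideal.Quotient.mk _ Polynomial.X

/-!
Let `h` be multiplication by `c` on a commutative algebra generated by `x` with `xⁿ = 0`. On
tensors, `h ⊗ Id` and `Id ⊗ h` are multiplication by `c ⊗ 1` and `1 ⊗ c`, so the relations for `m`
are associativity and commutativity. Put `z = ∑ xⁱ ⊗ xⁿ⁻¹⁻ⁱ`; the telescoping identity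
`(x ⊗ 1 - 1 ⊗ x) z = xⁿ ⊗ 1 - 1 ⊗ xⁿ = 0` shows that `x ⊗ 1` and `1 ⊗ x` act equally on `z`, hence
so do `a ⊗ 1` and `1 ⊗ a` for every `a`. The formulas for `Δ` on the powers of `x` say exactly that
`Δ a = (a ⊗ 1) z`, so all three maps in the relations for `Δ` send `a` to `(c a ⊗ 1) z`.
-/

section Multiplication

variable {R A : Type*} [CommSemiring R]

theorem mul'_comp_map_mulLeft_id [NonUnitalSemiring A] [Module R A] [IsScalarTower R A A]
    [SMulCommClass R A A] (c : A) :
    LinearMap.mul' R A ∘ₗ TensorProduct.map (LinearMap.mulLeft R c) LinearMap.id =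
      LinearMap.mulLeft R c ∘ₗ LinearMap.mul' R A :=
  TensorProduct.ext' fun a b ↦ mul_assoc c a b

theorem mul'_comp_map_id_mulLeft [NonUnitalCommSemiring A] [Module R A]
    [IsScalarTower R A A] [SMulCommClass R A A] (c : A) :
    LinearMap.mul' R A ∘ₗ TensorProduct.map LinearMap.id (LinearMap.mulLeft R c) =
      LinearMap.mulLeft R c ∘ₗ LinearMap.mul' R A :=
  TensorProduct.ext' fun a b ↦ mul_left_comm a c b

theorem map_mulLeft_id [Semiring A] [Algebra R A] (c : A) :
    TensorProduct.map (LinearMap.mulLeft R c) LinearMap.id =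
      LinearMap.mulLeft R (c ⊗ₜ[R] (1 : A)) :=
  TensorProduct.ext' fun a b ↦ by simp

theorem map_id_mulLeft [Semiring A] [Algebra R A] (c : A) :
    TensorProduct.map LinearMap.id (LinearMap.mulLeft R c) =
      LinearMap.mulLeft R ((1 : A) ⊗ₜ[R] c) :=
  TensorProduct.ext' fun a b ↦ by simp

end Multiplication

section Generators

variable {R A : Type*} [CommSemiring R]

theorem linearMap_ext_of_adjoin_singleton_eq_top [Semiring A] [Algebra R A] {N : Type*}
    [AddCommMonoid N] [Module R N] {x : A} (hx : Algebra.adjoin R {x} = ⊤) {f g : A →ₗ[R] N}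
    (hfg : ∀ k : ℕ, f (x ^ k) = g (x ^ k)) : f = g := by
  have hspan : Submodule.span R (Set.range (x ^ · : ℕ → A)) = ⊤ := by
    rw [← Submonoid.coe_powers, Submonoid.powers_eq_closure, ← Algebra.adjoin_eq_span, hx,
      Algebra.top_toSubmodule]
  exact LinearMap.ext_on_range hspan hfg

theorem tmul_one_mul_eq_one_tmul_mul_of_adjoin_eq_top [CommSemiring A] [Algebra R A] {s : Set A}
    (hs : Algebra.adjoin R s = ⊤) {z : A ⊗[R] A}
    (hz : ∀ x ∈ s, (x ⊗ₜ[R] 1) * z = (1 ⊗ₜ[R] x) * z) (a : A) :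
    (a ⊗ₜ[R] 1) * z = (1 ⊗ₜ[R] a) * z := by
  have ha : a ∈ Algebra.adjoin R s := hs ▸ Algebra.mem_top
  induction ha using Algebra.adjoin_induction with
  | mem x hx => exact hz x hx
  | algebraMap r => rw [Algebra.TensorProduct.tmul_one_eq_one_tmul]
  | add a b _ _ iha ihb => rw [add_tmul, tmul_add, add_mul, add_mul, iha, ihb]
  | mul a b _ _ iha ihb =>
    calc ((a * b) ⊗ₜ[R] 1) * z
        = (a ⊗ₜ[R] 1) * ((b ⊗ₜ[R] 1) * z) := by
          rw [← mul_assoc, Algebra.TensorProduct.tmul_mul_tmul, one_mul]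
      _ = (1 ⊗ₜ[R] b) * ((a ⊗ₜ[R] 1) * z) := by rw [ihb, mul_left_comm]
      _ = (1 ⊗ₜ[R] (a * b)) * z := by
          rw [iha, ← mul_assoc, Algebra.TensorProduct.tmul_mul_tmul, one_mul, mul_comm b]

end Generators

/-- The Casimir element `∑_{i + j = n - 1} xⁱ ⊗ xʲ` of the Frobenius algebra `R[x]/(xⁿ)`, from which
the comultiplication is recovered as `a ↦ (a ⊗ 1) * casimir R x n`. The definition makes sense for
an element `x` of any algebra. -/
def casimir (R : Type*) {A : Type*} [CommSemiring R] [Semiring A] [Algebra R A] (x : A) (n : ℕ) :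
    A ⊗[R] A :=
  ∑ i ∈ Finset.range n, (x ^ i) ⊗ₜ[R] (x ^ (n - 1 - i))

section Casimir

variable {R A : Type*} [CommSemiring R]

theorem pow_tmul_one_mul_casimir [Semiring A] [Algebra R A] {x : A} {n : ℕ}
    (hx : x ^ n = 0) (k : ℕ) :
    ((x ^ k) ⊗ₜ[R] 1) * casimir R x n =
      ∑ i ∈ Finset.range (n - k), (x ^ (k + i)) ⊗ₜ[R] (x ^ (n - 1 - i)) := by
  simp only [casimir, Finset.mul_sum, Algebra.TensorProduct.tmul_mul_tmul, one_mul, ← pow_add]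
  refine (Finset.sum_subset (Finset.range_mono (Nat.sub_le n k)) fun i _ hi ↦ ?_).symm
  rw [Finset.mem_range, not_lt, Nat.sub_le_iff_le_add'] at hi
  rw [pow_eq_zero_of_le hi hx, zero_tmul]

theorem tmul_one_mul_casimir [CommRing A] [Algebra R A] {x : A} {n : ℕ} (hx : x ^ n = 0) :
    (x ⊗ₜ[R] 1) * casimir R x n = (1 ⊗ₜ[R] x) * casimir R x n := by
  have hcasimir : casimir R x n = ∑ i ∈ Finset.range n,
      (x ⊗ₜ[R] (1 : A)) ^ i * ((1 : A) ⊗ₜ[R] x) ^ (n - 1 - i) := by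
    simp only [casimir, Algebra.TensorProduct.tmul_pow, Algebra.TensorProduct.tmul_mul_tmul,
      one_pow, one_mul, mul_one]
  have htelescope : casimir R x n * (x ⊗ₜ[R] 1 - 1 ⊗ₜ[R] x) = 0 := by
    rw [hcasimir, (Commute.all _ _).geom_sum₂_mul, Algebra.TensorProduct.tmul_pow,
      Algebra.TensorProduct.tmul_pow, hx, zero_tmul, tmul_zero, sub_zero]
  rwa [mul_comm, sub_mul, sub_eq_zero] at htelescope

end Casimir

theorem comul_apply_eq_tmul_one_mul_casimir {R A : Type*} [CommSemiring R] [Semiring A]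
    [Algebra R A] {x : A} {n : ℕ} (hgen : Algebra.adjoin R {x} = ⊤) (hx : x ^ n = 0)
    {Δ : A →ₗ[R] A ⊗[R] A}
    (hΔ : ∀ k < n, Δ (x ^ k) =
      ∑ i ∈ Finset.range (n - k), (x ^ (k + i)) ⊗ₜ[R] (x ^ (n - 1 - i))) (a : A) :
    Δ a = (a ⊗ₜ[R] 1) * casimir R x n := by
  suffices h : Δ = LinearMap.mulRight R (casimir R x n) ∘ₗ
      (Algebra.TensorProduct.includeLeft : A →ₐ[R] A ⊗[R] A).toLinearMap from
    LinearMap.congr_fun h a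
  refine linearMap_ext_of_adjoin_singleton_eq_top hgen fun k ↦ ?_
  change Δ (x ^ k) = ((x ^ k) ⊗ₜ[R] 1) * casimir R x n
  obtain hk | hk := lt_or_ge k n
  · rw [hΔ k hk, pow_tmul_one_mul_casimir hx]
  · rw [pow_eq_zero_of_le hk hx, map_zero, zero_tmul, zero_mul]

theorem stmt1_general {R A : Type*} [CommSemiring R] [CommRing A] [Algebra R A] {x : A} {n : ℕ}
    (hgen : Algebra.adjoin R {x} = ⊤) (hx : x ^ n = 0) (Δ : A →ₗ[R] A ⊗[R] A)
    (hΔ : ∀ k < n, Δ (x ^ k) =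
      ∑ i ∈ Finset.range (n - k), (x ^ (k + i)) ⊗ₜ[R] (x ^ (n - 1 - i)))
    (h : A →ₗ[R] A) {c : A} (hh : h = LinearMap.mulLeft R c) :
    (LinearMap.mul' R A ∘ₗ TensorProduct.map h LinearMap.id = h ∘ₗ LinearMap.mul' R A ∧
      h ∘ₗ LinearMap.mul' R A = LinearMap.mul' R A ∘ₗ TensorProduct.map LinearMap.id h) ∧
    (TensorProduct.map h LinearMap.id ∘ₗ Δ = Δ ∘ₗ h ∧
      Δ ∘ₗ h = TensorProduct.map LinearMap.id h ∘ₗ Δ) := by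
  subst hh
  have hΔ_apply := comul_apply_eq_tmul_one_mul_casimir hgen hx hΔ
  have hleft : TensorProduct.map (LinearMap.mulLeft R c) LinearMap.id ∘ₗ Δ =
      Δ ∘ₗ LinearMap.mulLeft R c := by
    ext a
    simp only [LinearMap.comp_apply, map_mulLeft_id, LinearMap.mulLeft_apply, hΔ_apply, ← mul_assoc,
      Algebra.TensorProduct.tmul_mul_tmul, one_mul]
  have hright : TensorProduct.map LinearMap.id (LinearMap.mulLeft R c) ∘ₗ Δ =
      TensorProduct.map (LinearMap.mulLeft R c) LinearMap.id ∘ₗ Δ := by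
    have hbalanced : (c ⊗ₜ[R] 1) * casimir R x n = (1 ⊗ₜ[R] c) * casimir R x n :=
      tmul_one_mul_eq_one_tmul_mul_of_adjoin_eq_top hgen
        (by rintro _ rfl; exact tmul_one_mul_casimir hx) c
    ext a
    simp only [LinearMap.comp_apply, map_mulLeft_id, map_id_mulLeft, LinearMap.mulLeft_apply,
      hΔ_apply]
    rw [mul_left_comm, ← hbalanced, mul_left_comm]
  exact ⟨⟨mul'_comp_map_mulLeft_id c, (mul'_comp_map_id_mulLeft c).symm⟩,
    hleft, hleft.symm.trans hright.symm⟩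

theorem adjoin_x3 : Algebra.adjoin R3 {x3} = ⊤ :=
  AdjoinRoot.adjoinRoot_eq_top (f := (X : R3[X]) ^ 3)

theorem x3_pow_three : x3 ^ 3 = 0 := by
  rw [x3, ← map_pow, Ideal.Quotient.eq_zero_iff_mem]
  exact Ideal.mem_span_singleton_self _

theorem comul_x3_pow {Δ : M3 →ₗ[R3] M3 ⊗[R3] M3}
    (hΔ1 : Δ 1 = 1 ⊗ₜ[R3] (x3 ^ 2) + x3 ⊗ₜ[R3] x3 + (x3 ^ 2) ⊗ₜ[R3] 1)
    (hΔx : Δ x3 = x3 ⊗ₜ[R3] (x3 ^ 2) + (x3 ^ 2) ⊗ₜ[R3] x3)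
    (hΔx2 : Δ (x3 ^ 2) = (x3 ^ 2) ⊗ₜ[R3] (x3 ^ 2)) :
    ∀ k < 3, Δ (x3 ^ k) =
      ∑ i ∈ Finset.range (3 - k), (x3 ^ (k + i)) ⊗ₜ[R3] (x3 ^ (3 - 1 - i)) := by
  intro k hk
  interval_cases k <;> simp [Finset.sum_range_succ, hΔ1, hΔx, hΔx2]

/-- Puncture-move relations: `m ∘ (h ⊗ Id) = h ∘ m = m ∘ (Id ⊗ h)` and
`(h ⊗ Id) ∘ Δ = Δ ∘ h = (Id ⊗ h) ∘ Δ`. -/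
theorem stmt1
    (Δ : M3 →ₗ[R3] M3 ⊗[R3] M3)
    (hΔ1 : Δ 1 = 1 ⊗ₜ[R3] (x3 ^ 2) + x3 ⊗ₜ[R3] x3 + (x3 ^ 2) ⊗ₜ[R3] 1)
    (hΔx : Δ x3 = x3 ⊗ₜ[R3] (x3 ^ 2) + (x3 ^ 2) ⊗ₜ[R3] x3)
    (hΔx2 : Δ (x3 ^ 2) = (x3 ^ 2) ⊗ₜ[R3] (x3 ^ 2))
    (h : M3 →ₗ[R3] M3)
    (hh : h = LinearMap.mulLeft R3 ((Zsqrtd.sqrtd : R3) • x3)) :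
    (LinearMap.mul' R3 M3 ∘ₗ TensorProduct.map h LinearMap.id
        = h ∘ₗ LinearMap.mul' R3 M3 ∧
      h ∘ₗ LinearMap.mul' R3 M3
        = LinearMap.mul' R3 M3 ∘ₗ TensorProduct.map LinearMap.id h) ∧
    (TensorProduct.map h LinearMap.id ∘ₗ Δ = Δ ∘ₗ h ∧
      Δ ∘ₗ h = TensorProduct.map LinearMap.id h ∘ₗ Δ) :=
  stmt1_general adjoin_x3 x3_pow_three Δ (comul_x3_pow hΔ1 hΔx hΔx2) h hh
end
end

section
/- Let R = ℤ[√3], M = R[X]/(X³), m the multiplication map and Δ the comultiplication. For an element c ∈ M, the R-linear endomorphism 'multiplication by c' satisfies (multiplication by c)² = m ∘ Δ if and only if c² = 3·x², and this holds if and only if there exists h₂ ∈ R such that c = √3·x + h₂·x² or c = −√3·x + h₂·x². In particular, up to the sign of the coefficient of x and an arbitrary x²-coefficient, multiplication by √3·x is the unique M-module endomorphism h of M with h² = m ∘ Δ. -/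
open TensorProduct Polynomial

noncomputable section

/-!
In `R[X]/(Xⁿ)` one has `m (Δ xⁱ) = (n - i) xⁿ⁻¹⁺ⁱ`, which vanishes for `0 < i`, so `m ∘ Δ` is
multiplication by the Euler element `m (Δ 1) = n xⁿ⁻¹`, and multiplication by `c` squares to `m ∘ Δ`
exactly when `c² = n xⁿ⁻¹`. If `n = 2k + 1 = s²` and `c` is the class of `p`, this says that
`X^(2k+1)` divides `p² - (s X^k)² = (p - s X^k)(p + s X^k)`. Over a domain `X` is prime, so `X^k`
divides `p` and hence both factors, and one of them must be divisible by `X^(k+1)`. The theorem is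
the case `k = 1`.
-/

theorem pow_dvd_of_pow_two_mul_dvd_sq {A : Type*} [CommMonoidWithZero A] [IsCancelMulZero A]
    {π a : A} {k : ℕ} (hπ : Prime π) (h : π ^ (2 * k) ∣ a ^ 2) : π ^ k ∣ a := by
  suffices ∀ j ≤ k, π ^ j ∣ a from this k le_rfl
  intro j
  induction j with
  | zero => simp
  | succ j ih =>
    intro hj
    have hja : π ^ j ∣ a := ih (by lia)
    have hdvd : π ^ (j + j + 1) ∣ a * a := sq a ▸ (pow_dvd_pow π (by lia)).trans h
    exact (succ_dvd_or_succ_dvd_of_succ_sum_dvd_mul hπ hja hja hdvd).elim id id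

theorem pow_dvd_sq_sub_sq_iff {A : Type*} [CommRing A] [IsCancelMulZero A] {π a b : A} {k : ℕ}
    (hπ : Prime π) (hb : π ^ k ∣ b) :
    π ^ (2 * k + 1) ∣ a ^ 2 - b ^ 2 ↔ π ^ (k + 1) ∣ a - b ∨ π ^ (k + 1) ∣ a + b := by
  have hfactor : a ^ 2 - b ^ 2 = (a - b) * (a + b) :=
    (sq_sub_sq a b).trans (mul_comm _ _)
  constructor
  · intro h
    have hb_sq : π ^ (2 * k) ∣ b ^ 2 := by
      simpa only [← pow_mul, mul_comm k 2] using pow_dvd_pow_of_dvd hb 2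
    have ha_sq : π ^ (2 * k) ∣ a ^ 2 :=
      (dvd_iff_dvd_of_dvd_sub ((pow_dvd_pow π (Nat.le_succ _)).trans h)).mpr hb_sq
    have ha : π ^ k ∣ a := pow_dvd_of_pow_two_mul_dvd_sq hπ ha_sq
    rw [hfactor, two_mul] at h
    exact succ_dvd_or_succ_dvd_of_succ_sum_dvd_mul hπ (dvd_sub ha hb) (dvd_add ha hb) h
  · have hk : π ^ k ∣ π ^ (k + 1) := pow_dvd_pow π (Nat.le_succ k)
    rw [hfactor]
    rintro (h | h)
    · have hadd : π ^ k ∣ a + b := by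
        rw [show a + b = a - b + 2 * b by ring]
        exact dvd_add (hk.trans h) (hb.mul_left 2)
      rw [show 2 * k + 1 = k + 1 + k by ring, pow_add]
      exact mul_dvd_mul h hadd
    · have hsub : π ^ k ∣ a - b := by
        rw [show a - b = a + b - 2 * b by ring]
        exact dvd_sub (hk.trans h) (hb.mul_left 2)
      rw [show 2 * k + 1 = k + (k + 1) by ring, pow_add]
      exact mul_dvd_mul hsub h

/-- The truncated polynomial ring `R[X]/(Xⁿ)`; `M3` is the case `R = ℤ[√3]`, `n = 3`. -/
abbrev TruncatedPolynomial (R : Type*) [CommRing R] (n : ℕ) : Type _ :=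
  R[X] ⧸ Ideal.span {(X : R[X]) ^ n}

namespace TruncatedPolynomial

open Finset.HasAntidiagonal (antidiagonal mem_antidiagonal)

section CommRing

variable (R : Type*) [CommRing R] (n : ℕ)

/-- The image of `X` in `R[X]/(Xⁿ)`, which generates it as an `R`-algebra; it specializes to
`x3`. -/
def gen : TruncatedPolynomial R n := Ideal.Quotient.mk _ X

variable {R n}

theorem mk_eq_zero_iff {p : R[X]} :
    (Ideal.Quotient.mk _ p : TruncatedPolynomial R n) = 0 ↔ X ^ n ∣ p :=
  Ideal.Quotient.eq_zero_iff_dvd _ _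

theorem mk_C_mul_X_pow (r : R) (i : ℕ) :
    (Ideal.Quotient.mk _ (C r * X ^ i) : TruncatedPolynomial R n) = r • gen R n ^ i := by
  rw [← smul_eq_C_mul]
  rfl

theorem algebraMap_mul_eq_smul (r : R) (y : TruncatedPolynomial R n) :
    algebraMap R _ r * y = r • y :=
  (Algebra.smul_def r y).symm

theorem gen_pow_eq_zero {i : ℕ} (hi : n ≤ i) : gen R n ^ i = 0 :=
  mk_eq_zero_iff.mpr (pow_dvd_pow X hi)

theorem gen_pow_dvd_mk_iff {m : ℕ} (hm : m ≤ n) {p : R[X]} :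
    gen R n ^ m ∣ Ideal.Quotient.mk _ p ↔ X ^ m ∣ p := by
  constructor
  · rintro ⟨y, hy⟩
    obtain ⟨q, rfl⟩ := Ideal.Quotient.mk_surjective y
    have hsub : X ^ n ∣ p - X ^ m * q :=
      mk_eq_zero_iff.mp ((map_sub _ _ _).trans (sub_eq_zero.mpr hy))
    exact (dvd_iff_dvd_of_dvd_sub ((pow_dvd_pow X hm).trans hsub)).mpr (dvd_mul_right _ _)
  · exact map_dvd (Ideal.Quotient.mk _)

theorem gen_pow_dvd_iff_exists_smul {j : ℕ} (hn : n = j + 1) {y : TruncatedPolynomial R n} :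
    gen R n ^ j ∣ y ↔ ∃ r : R, y = r • gen R n ^ j := by
  constructor
  · rintro ⟨z, rfl⟩
    obtain ⟨p, rfl⟩ := Ideal.Quotient.mk_surjective z
    refine ⟨p.coeff 0, sub_eq_zero.mp ?_⟩
    rw [← mk_C_mul_X_pow]
    refine mk_eq_zero_iff.mpr ⟨p.divX, ?_⟩
    rw [hn]
    linear_combination -X ^ j * divX_mul_X_add p
  · rintro ⟨r, rfl⟩
    exact dvd_smul_of_dvd r dvd_rfl

theorem linearMap_ext {N : Type*} [AddCommGroup N] [Module R N]
    {f g : TruncatedPolynomial R n →ₗ[R] N}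
    (h : ∀ i < n, f (gen R n ^ i) = g (gen R n ^ i)) : f = g := by
  have hpow (i : ℕ) : f (gen R n ^ i) = g (gen R n ^ i) := by
    obtain hi | hi := lt_or_ge i n
    · exact h i hi
    · rw [gen_pow_eq_zero hi, map_zero, map_zero]
  rw [← LinearMap.cancel_right
    (g := (Ideal.Quotient.mkₐ R (Ideal.span {(X : R[X]) ^ n})).toLinearMap)
    (Ideal.Quotient.mkₐ_surjective R _)]
  refine lhom_ext' fun i => LinearMap.ext_ring ?_
  simpa [monomial_one_right_eq_X_pow, gen] using hpow i

/-- The comultiplication of `R[X]/(Xⁿ)` as a Frobenius algebra whose counit reads off the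
coefficient of `xⁿ⁻¹`, given by its values on the basis `1, x, …, xⁿ⁻¹`. The exponents `i ≤ n - 1`
are encoded by `i + j + 1 = n` to avoid truncated subtraction. -/
def IsFrobeniusComul
    (Δ : TruncatedPolynomial R n →ₗ[R] TruncatedPolynomial R n ⊗[R] TruncatedPolynomial R n) :
    Prop :=
  ∀ i j, i + j + 1 = n → Δ (gen R n ^ i) =
    ∑ p ∈ antidiagonal j, (gen R n ^ (i + p.1)) ⊗ₜ[R] (gen R n ^ (i + p.2))

theorem isFrobeniusComul_three
    {Δ : TruncatedPolynomial R 3 →ₗ[R] TruncatedPolynomial R 3 ⊗[R] TruncatedPolynomial R 3}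
    (h0 : Δ 1 = 1 ⊗ₜ[R] (gen R 3 ^ 2) + gen R 3 ⊗ₜ[R] gen R 3 + (gen R 3 ^ 2) ⊗ₜ[R] 1)
    (h1 : Δ (gen R 3) = gen R 3 ⊗ₜ[R] (gen R 3 ^ 2) + (gen R 3 ^ 2) ⊗ₜ[R] gen R 3)
    (h2 : Δ (gen R 3 ^ 2) = (gen R 3 ^ 2) ⊗ₜ[R] (gen R 3 ^ 2)) :
    IsFrobeniusComul Δ := by
  intro i j hij
  obtain ⟨rfl, rfl⟩ | ⟨rfl, rfl⟩ | ⟨rfl, rfl⟩ :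
      i = 0 ∧ j = 2 ∨ i = 1 ∧ j = 1 ∨ i = 2 ∧ j = 0 := by lia
  · simp [h0, Finset.Nat.antidiagonal_succ, add_assoc]
  · simp [h1, Finset.Nat.antidiagonal_succ]
  · simp [h2]

theorem IsFrobeniusComul.mul'_comp
    {Δ : TruncatedPolynomial R n →ₗ[R] TruncatedPolynomial R n ⊗[R] TruncatedPolynomial R n}
    (hΔ : IsFrobeniusComul Δ) :
    LinearMap.mul' R (TruncatedPolynomial R n) ∘ₗ Δ =
      LinearMap.mulLeft R (n * gen R n ^ (n - 1)) := by
  refine linearMap_ext fun i hi => ?_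
  obtain ⟨j, hj⟩ : ∃ j, i + j + 1 = n := ⟨n - 1 - i, by lia⟩
  set x := gen R n
  have hterm (p : ℕ × ℕ) (hp : p ∈ antidiagonal j) :
      x ^ (i + p.1) * x ^ (i + p.2) = x ^ (n - 1) * x ^ i := by
    have hp_sum : p.1 + p.2 = j := mem_antidiagonal.mp hp
    rw [← pow_add, ← pow_add, show i + p.1 + (i + p.2) = n - 1 + i by lia]
  have hsum : LinearMap.mul' R _ (Δ (x ^ i)) = (j + 1 : ℕ) * (x ^ (n - 1) * x ^ i) := by
    rw [hΔ i j hj, map_sum]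
    simp only [LinearMap.mul'_apply]
    rw [Finset.sum_congr rfl hterm, Finset.sum_const, Finset.Nat.card_antidiagonal, nsmul_eq_mul]
  rw [LinearMap.comp_apply, hsum, LinearMap.mulLeft_apply, mul_assoc]
  obtain rfl | hi_pos := Nat.eq_zero_or_pos i
  · rw [show j + 1 = n by lia]
  · rw [← pow_add, gen_pow_eq_zero (by lia), mul_zero, mul_zero]

theorem IsFrobeniusComul.mulLeft_comp_mulLeft_eq_iff
    {Δ : TruncatedPolynomial R n →ₗ[R] TruncatedPolynomial R n ⊗[R] TruncatedPolynomial R n}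
    (hΔ : IsFrobeniusComul Δ) {c : TruncatedPolynomial R n} :
    LinearMap.mulLeft R c ∘ₗ LinearMap.mulLeft R c =
        LinearMap.mul' R (TruncatedPolynomial R n) ∘ₗ Δ ↔
      c ^ 2 = n * gen R n ^ (n - 1) := by
  rw [hΔ.mul'_comp, ← LinearMap.mulLeft_mul, ← sq, LinearMap.mulLeft_inj]

end CommRing

section IsDomain

variable {R : Type*} [CommRing R] [IsDomain R]

theorem sq_eq_sq_smul_gen_pow_iff {n k : ℕ} (hn : n = 2 * k + 1) {s : R}
    {c : TruncatedPolynomial R n} :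
    c ^ 2 = s ^ 2 • gen R n ^ (2 * k) ↔
      gen R n ^ (k + 1) ∣ c - s • gen R n ^ k ∨ gen R n ^ (k + 1) ∣ c + s • gen R n ^ k := by
  obtain ⟨p, rfl⟩ := Ideal.Quotient.mk_surjective c
  have hsq : (C s * X ^ k) ^ 2 = C (s ^ 2) * X ^ (2 * k) := by
    rw [mul_pow, ← C_pow, ← pow_mul, mul_comm k]
  rw [← sub_eq_zero, ← mk_C_mul_X_pow, ← mk_C_mul_X_pow, ← hsq, ← map_pow, ← map_sub, ← map_sub,
    ← map_add, mk_eq_zero_iff, gen_pow_dvd_mk_iff (by lia), gen_pow_dvd_mk_iff (by lia), hn]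
  exact pow_dvd_sq_sub_sq_iff prime_X (dvd_mul_left _ _)

theorem sq_eq_three_mul_gen_sq_iff {s : R} (hs : s ^ 2 = 3) {c : TruncatedPolynomial R 3} :
    c ^ 2 = 3 * gen R 3 ^ 2 ↔
      ∃ r : R, c = s • gen R 3 + r • gen R 3 ^ 2 ∨ c = -(s • gen R 3) + r • gen R 3 ^ 2 := by
  have hthree : (3 : TruncatedPolynomial R 3) * gen R 3 ^ 2 = s ^ 2 • gen R 3 ^ (2 * 1) := by
    rw [hs, ← algebraMap_mul_eq_smul, map_ofNat]
  rw [hthree, sq_eq_sq_smul_gen_pow_iff (show 3 = 2 * 1 + 1 from rfl),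
    gen_pow_dvd_iff_exists_smul rfl, gen_pow_dvd_iff_exists_smul rfl, ← exists_or]
  simp only [pow_one, sub_eq_iff_eq_add', ← eq_neg_add_iff_add_eq, add_comm c]

end IsDomain

end TruncatedPolynomial

instance : Zsqrtd.Nonsquare 3 :=
  ⟨fun n hn => Nat.prime_three.prime.not_isSquare ⟨n, hn⟩⟩

instance : IsDomain R3 := inferInstanceAs (IsDomain (ℤ√(3 : ℕ)))

theorem sqrtd_three_sq : (Zsqrtd.sqrtd : R3) ^ 2 = 3 := by
  rw [sq, Zsqrtd.dmuld]
  rfl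

open TruncatedPolynomial in
theorem stmt6_general {R : Type*} [CommRing R] [IsDomain R] {s : R} (hs : s ^ 2 = 3)
    (Δ : TruncatedPolynomial R 3 →ₗ[R] TruncatedPolynomial R 3 ⊗[R] TruncatedPolynomial R 3)
    (hΔ1 : Δ 1 = 1 ⊗ₜ[R] (gen R 3 ^ 2) + gen R 3 ⊗ₜ[R] gen R 3 + (gen R 3 ^ 2) ⊗ₜ[R] 1)
    (hΔx : Δ (gen R 3) = gen R 3 ⊗ₜ[R] (gen R 3 ^ 2) + (gen R 3 ^ 2) ⊗ₜ[R] gen R 3)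
    (hΔx2 : Δ (gen R 3 ^ 2) = (gen R 3 ^ 2) ⊗ₜ[R] (gen R 3 ^ 2))
    (c : TruncatedPolynomial R 3) :
    (LinearMap.mulLeft R c ∘ₗ LinearMap.mulLeft R c =
        LinearMap.mul' R (TruncatedPolynomial R 3) ∘ₗ Δ ↔
      c ^ 2 = 3 * gen R 3 ^ 2) ∧
    (c ^ 2 = 3 * gen R 3 ^ 2 ↔
      ∃ h₂ : R, c = s • gen R 3 + h₂ • gen R 3 ^ 2 ∨
        c = -(s • gen R 3) + h₂ • gen R 3 ^ 2) :=
  ⟨(isFrobeniusComul_three hΔ1 hΔx hΔx2).mulLeft_comp_mulLeft_eq_iff,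
    sq_eq_three_mul_gen_sq_iff hs⟩

/-- For `c ∈ M`, multiplication by `c` squares to `m ∘ Δ` iff `c² = 3·x²`, iff
`c = ±√3·x + h₂·x²` for some `h₂ ∈ R`. -/
theorem stmt6
    (Δ : M3 →ₗ[R3] M3 ⊗[R3] M3)
    (hΔ1 : Δ 1 = 1 ⊗ₜ[R3] (x3 ^ 2) + x3 ⊗ₜ[R3] x3 + (x3 ^ 2) ⊗ₜ[R3] 1)
    (hΔx : Δ x3 = x3 ⊗ₜ[R3] (x3 ^ 2) + (x3 ^ 2) ⊗ₜ[R3] x3)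
    (hΔx2 : Δ (x3 ^ 2) = (x3 ^ 2) ⊗ₜ[R3] (x3 ^ 2))
    (c : M3) :
    (LinearMap.mulLeft R3 c ∘ₗ LinearMap.mulLeft R3 c = LinearMap.mul' R3 M3 ∘ₗ Δ ↔
      c ^ 2 = 3 * x3 ^ 2) ∧
    (c ^ 2 = 3 * x3 ^ 2 ↔
      ∃ h₂ : R3, c = (Zsqrtd.sqrtd : R3) • x3 + h₂ • x3 ^ 2 ∨
        c = -((Zsqrtd.sqrtd : R3) • x3) + h₂ • x3 ^ 2) :=
  stmt6_general sqrtd_three_sq Δ hΔ1 hΔx hΔx2 c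
end
end
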